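/- arXiv:math/0605049 — 2 statements merged into one kernel-verified Lean document; each statement's English description precedes it below -/
import Mathlib

section
/- Let D be an L^1-closed convex subset of 𝒫 and define u(X) = inf_{Q∈D} E_Q[X] for X ∈ L^0. Then D is the determining set of u, i.e., D = {Q ∈ 𝒫 : E_Q[X] ≥ u(X) for every X ∈ L^0}; moreover, D also equals the determining set of the restriction of u to L^∞, i.e., D = {Q ∈ 𝒫 : E_Q[X] ≥ u(X) for every X ∈ L^∞}. -/
open MeasureTheory Filter Set
open scoped ENNReal

variable {Ω : Type*} [MeasurableSpace Ω]

/-- Densities of probability measures absolutely continuous w.r.t. `P`. -/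
def Dens (P : Measure Ω) : Set (Ω → ℝ) :=
  {Z | Measurable Z ∧ (∀ ω, 0 ≤ Z ω) ∧ ∫⁻ ω, ENNReal.ofReal (Z ω) ∂P = 1}

/-- `E_Q[X] = E_Q[X⁺] − E_Q[X⁻]` with the convention `∞ − ∞ = −∞`, where `dQ/dP = Z`. -/
noncomputable def eexp (P : Measure Ω) (Z X : Ω → ℝ) : EReal :=
  if (∫⁻ ω, ENNReal.ofReal (-(Z ω * X ω)) ∂P) = ⊤ then ⊥
  else ((∫⁻ ω, ENNReal.ofReal (Z ω * X ω) ∂P : ℝ≥0∞) : EReal)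
    - ((∫⁻ ω, ENNReal.ofReal (-(Z ω * X ω)) ∂P : ℝ≥0∞) : EReal)

/-- Coherent utility function determined by a set of densities `D`. -/
noncomputable def cohU (P : Measure Ω) (D : Set (Ω → ℝ)) (X : Ω → ℝ) : EReal :=
  ⨅ Z ∈ D, eexp P Z X

/-- The weak `L¹`-space associated with `D`. -/
def Lw (P : Measure Ω) (D : Set (Ω → ℝ)) : Set (Ω → ℝ) :=
  {X | Measurable X ∧ ⊥ < cohU P D X ∧ ⊥ < cohU P D (fun ω => -X ω)}

noncomputable def tailSup (P : Measure Ω) (D : Set (Ω → ℝ)) (X : Ω → ℝ) (n : ℕ) : ℝ≥0∞ :=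
  ⨆ Z ∈ D, ∫⁻ ω in {ω | (n : ℝ) < |X ω|}, ENNReal.ofReal (Z ω * |X ω|) ∂P

/-- The strong `L¹`-space associated with `D`. -/
def Ls (P : Measure Ω) (D : Set (Ω → ℝ)) : Set (Ω → ℝ) :=
  {X | Measurable X ∧ Tendsto (tailSup P D X) atTop (nhds 0)}

/-- Risk-neutral densities for the set `A` of attainable P&Ls. -/
def RiskNeutral (P : Measure Ω) (A : Set (Ω → ℝ)) : Set (Ω → ℝ) :=
  {Z | Z ∈ Dens P ∧ ∀ X ∈ A, eexp P Z X ≤ 0}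

/-- `A` is `D`-consistent. -/
def DConsistent (P : Measure Ω) (D A : Set (Ω → ℝ)) : Prop :=
  ∃ A' ⊆ A ∩ Ls P D, D ∩ RiskNeutral P A = D ∩ RiskNeutral P A'

/-- Sequential compactness of `D` in the weak topology `σ(L¹, L^∞)`. -/
def WSeqCompact (P : Measure Ω) (D : Set (Ω → ℝ)) : Prop :=
  ∀ Z : ℕ → Ω → ℝ, (∀ n, Z n ∈ D) → ∃ W ∈ D, ∃ φ : ℕ → ℕ, StrictMono φ ∧
    ∀ g : Ω → ℝ, Measurable g → (∃ C : ℝ, ∀ ω, |g ω| ≤ C) →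
      Tendsto (fun k => ∫ ω, Z (φ k) ω * g ω ∂P) atTop (nhds (∫ ω, W ω * g ω ∂P))

/-- `D` is closed under `L¹`-convergence (within densities). -/
def L1Closed (P : Measure Ω) (D : Set (Ω → ℝ)) : Prop :=
  ∀ Z : ℕ → Ω → ℝ, (∀ n, Z n ∈ D) → ∀ W ∈ Dens P,
    Tendsto (fun n => ∫ ω, |Z n ω - W ω| ∂P) atTop (nhds 0) → W ∈ D


/-!
Every `Q ∈ D` satisfies `E_Q[X] ≥ u(X)` by the definition of `u`. Conversely, if `Q ∉ D` then, `D`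
being convex and closed in `L¹`, Hahn–Banach strictly separates `dQ/dP` from `D` by a continuous
functional on `L¹`. Since `(L¹)* = L^∞`, this functional is `Z ↦ E[Z X]` for a bounded `X`, and the
separation says `E_Q[X] < u(X)`, so a bounded `X` already excludes `Q`.
-/

section Duality

variable {μ : Measure Ω}

theorem tendsto_measure_inter_abs_lt_one_div {w : Ω → ℝ} (hw : Measurable w)
    (hne : ∀ᵐ ω ∂μ, w ω ≠ 0) {s : Set Ω} (hs : MeasurableSet s) (hμs : μ s ≠ ∞) :
    Tendsto (fun n : ℕ => μ (s ∩ {ω | |w ω| < 1 / ((n : ℝ) + 1)})) atTop (nhds 0) := by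
  have hnull : μ (⋂ n : ℕ, s ∩ {ω | |w ω| < 1 / ((n : ℝ) + 1)}) = 0 := by
    refine measure_mono_null (fun ω hω => ?_) (ae_iff.1 hne)
    by_contra hwω
    obtain ⟨n, hn⟩ := exists_nat_one_div_lt (abs_pos.2 (not_not.1 hwω))
    exact hn.not_gt (mem_iInter.1 hω n).2
  rw [← hnull]
  refine tendsto_measure_iInter_atTop
    (fun n => (hs.inter (measurableSet_lt hw.abs measurable_const)).nullMeasurableSet)
    (fun m n hmn => inter_subset_inter_right s fun ω (hω : |w ω| < _) => ?_)
    ⟨0, measure_ne_top_of_subset inter_subset_left hμs⟩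
  exact hω.trans_le (Nat.one_div_le_one_div hmn)

/-- Multiplication by `w ∈ Lᵖ`, as a continuous linear map `Lᑫ → Lʳ` for `1/p + 1/q = 1/r`. -/
noncomputable def mulLp {p : ℝ≥0∞} (q r : ℝ≥0∞) [ENNReal.HolderTriple p q r]
    [Fact (1 ≤ p)] [Fact (1 ≤ q)] [Fact (1 ≤ r)] (w : Lp ℝ p μ) : Lp ℝ q μ →L[ℝ] Lp ℝ r μ :=
  (ContinuousLinearMap.mul ℝ ℝ).holderL μ p q r w

section DenseRange

variable {p q r : ℝ≥0∞} [ENNReal.HolderTriple p q r]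
  [Fact (1 ≤ p)] [Fact (1 ≤ q)] [Fact (1 ≤ r)]

theorem coeFn_mulLp (w : Lp ℝ p μ) (h : Lp ℝ q μ) :
    mulLp q r w h =ᵐ[μ] fun ω => w ω * h ω :=
  (ContinuousLinearMap.mul ℝ ℝ).coeFn_holder w h

theorem indicatorConstLp_mem_range_mulLp {w : Lp ℝ p μ} {s : Set Ω} (hs : MeasurableSet s)
    (hμs : μ s ≠ ∞) {δ : ℝ} (hδ : 0 < δ) (hw : ∀ ω ∈ s, δ ≤ |w ω|) (c : ℝ) :
    indicatorConstLp r hs hμs c ∈ range (mulLp q r w) := by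
  have hquot : MemLp (s.indicator fun ω => c / w ω) q μ := by
    refine (memLp_indicator_const q hs (|c| / δ) (.inr hμs)).mono
      ((measurable_const.div (Lp.stronglyMeasurable w).measurable).indicator
        hs).aestronglyMeasurable (ae_of_all _ fun ω => ?_)
    by_cases hω : ω ∈ s
    · have hle : |c| / |w ω| ≤ |c| / δ := div_le_div_of_nonneg_left (abs_nonneg c) hδ (hw ω hω)
      simpa [hω, abs_of_pos hδ] using hle
    · simp [hω]
  refine ⟨hquot.toLp, Lp.ext ?_⟩
  filter_upwards [coeFn_mulLp (r := r) w hquot.toLp, hquot.coeFn_toLp,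
    indicatorConstLp_coeFn (p := r) (hs := hs) (hμs := hμs) (c := c)] with ω hprod hquot_eq hind
  rw [hprod, hquot_eq, hind]
  by_cases hω : ω ∈ s
  · have hne : w ω ≠ 0 := abs_pos.1 (hδ.trans_le (hw ω hω))
    simp only [hω, indicator_of_mem]
    field_simp
  · simp only [hω, not_false_eq_true, indicator_of_notMem, mul_zero]

theorem denseRange_mulLp (hr : r ≠ ∞) {w : Lp ℝ p μ} (hw : ∀ᵐ ω ∂μ, w ω ≠ 0) :
    DenseRange (mulLp q r w) := by
  intro h
  suffices h ∈ (mulLp q r w).range.topologicalClosure from this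
  have hwm : Measurable w := (Lp.stronglyMeasurable w).measurable
  induction h using Lp.induction hr with
  | @indicatorConst c s hs hμs =>
    let t (n : ℕ) : Set Ω := s ∩ {ω | 1 / ((n : ℝ) + 1) ≤ |w ω|}
    have ht (n : ℕ) : MeasurableSet (t n) := hs.inter (measurableSet_le measurable_const hwm.abs)
    have hμt (n : ℕ) : μ (t n) ≠ ∞ := measure_ne_top_of_subset inter_subset_left hμs.ne
    have hts : Tendsto (fun n => μ (symmDiff (t n) s)) atTop (nhds 0) := by
      convert tendsto_measure_inter_abs_lt_one_div hwm hw hs hμs.ne using 3 with n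
      rw [symmDiff_of_le inter_subset_left, sdiff_self_inter]
      ext ω
      simp only [Set.mem_sdiff, mem_inter_iff, mem_ofPred_eq, not_le]
    exact mem_closure_of_tendsto (tendsto_indicatorConstLp_set (hs := hs) (hμs := hμs.ne)
      (ht := ht) (hμt := hμt) hr hts)
      (Eventually.of_forall fun n => indicatorConstLp_mem_range_mulLp (ht n) (hμt n)
        Nat.one_div_pos_of_nat (fun ω hω => hω.2) c)
  | add _ _ _ hu hv => exact add_mem hu hv
  | isClosed => exact Submodule.isClosed_topologicalClosure _

end DenseRange

theorem exists_memLp_forall_pos (μ : Measure Ω) [SigmaFinite μ] (p : ℝ≥0∞) :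
    ∃ w : Ω → ℝ, (∀ ω, 0 < w ω) ∧ MemLp w p μ := by
  obtain ⟨u, hupos, hum, hu⟩ := exists_pos_lintegral_lt_of_sigmaFinite μ one_ne_zero
  have hu1 : MemLp (fun ω => (u ω : ℝ)) 1 μ := memLp_one_iff_integrable.2
    ⟨hum.coe_nnreal_real.aestronglyMeasurable, by
      simpa [hasFiniteIntegral_iff_enorm] using hu.trans ENNReal.one_lt_top⟩
  refine ⟨fun ω => ‖(u ω : ℝ)‖ ^ (p⁻¹).toReal,
    fun ω => Real.rpow_pos_of_pos (norm_pos_iff.2 (NNReal.coe_ne_zero.2 (hupos ω).ne')) _, ?_⟩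
  simpa only [one_div, inv_inv] using hu1.norm_rpow_div p⁻¹

theorem ae_abs_le_of_forall_abs_setIntegral_le {φ ψ : Ω → ℝ} (hφ : Integrable φ μ)
    (hψ : Integrable ψ μ)
    (h : ∀ s, MeasurableSet s → |∫ ω in s, φ ω ∂μ| ≤ ∫ ω in s, ψ ω ∂μ) :
    ∀ᵐ ω ∂μ, |φ ω| ≤ ψ ω := by
  have hle : φ ≤ᵐ[μ] ψ := ae_le_of_forall_setIntegral_le hφ hψ fun s hs _ =>
    (abs_le.1 (h s hs)).2
  have hge : -ψ ≤ᵐ[μ] φ := ae_le_of_forall_setIntegral_le hψ.neg hφ fun s hs _ => by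
    simpa only [Pi.neg_apply, integral_neg] using (abs_le.1 (h s hs)).1
  filter_upwards [hle, hge] with ω hωle hωge
  exact abs_le.2 ⟨hωge, hωle⟩

theorem exists_forall_apply_mulLp_eq_integral (f : StrongDual ℝ (Lp ℝ 1 μ)) (w : Lp ℝ 2 μ) :
    ∃ k : Lp ℝ 2 μ, ∀ h : Lp ℝ 2 μ, f (mulLp 2 1 w h) = ∫ ω, k ω * h ω ∂μ := by
  refine ⟨(InnerProductSpace.toDual ℝ _).symm (f ∘L mulLp 2 1 w), fun h => ?_⟩
  rw [← ContinuousLinearMap.comp_apply, ← InnerProductSpace.toDual_symm_apply, L2.inner_def]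
  simp only [RCLike.inner_apply, conj_trivial, mul_comm]

theorem ae_abs_le_of_forall_apply_mulLp_eq_integral {f : StrongDual ℝ (Lp ℝ 1 μ)}
    {w k : Lp ℝ 2 μ} (hk : ∀ h : Lp ℝ 2 μ, f (mulLp 2 1 w h) = ∫ ω, k ω * h ω ∂μ) :
    ∀ᵐ ω ∂μ, |k ω * w ω| ≤ ‖f‖ * (w ω * w ω) := by
  refine ae_abs_le_of_forall_abs_setIntegral_le ((Lp.memLp k).integrable_mul (Lp.memLp w))
    (((Lp.memLp w).integrable_mul (Lp.memLp w)).const_mul _) fun s hs => ?_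
  have hws : MemLp (s.indicator w) 2 μ := (Lp.memLp w).indicator hs
  have hnorm : ‖mulLp 2 1 w hws.toLp‖ = ∫ ω in s, w ω * w ω ∂μ := by
    rw [L1.norm_eq_integral_norm, ← integral_indicator hs]
    refine integral_congr_ae ?_
    filter_upwards [coeFn_mulLp (r := 1) w hws.toLp, hws.coeFn_toLp] with ω hprod hω
    rw [hprod, hω]
    by_cases hωs : ω ∈ s <;> simp [hωs]
  calc |∫ ω in s, k ω * w ω ∂μ| = |f (mulLp 2 1 w hws.toLp)| := by
        rw [hk, ← integral_indicator hs]
        refine congrArg _ (integral_congr_ae ?_)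
        filter_upwards [hws.coeFn_toLp] with ω hω
        rw [hω, indicator_mul_right]
    _ ≤ ‖f‖ * ‖mulLp 2 1 w hws.toLp‖ := f.le_opNorm _
    _ = ∫ ω in s, ‖f‖ * (w ω * w ω) ∂μ := by rw [hnorm, integral_const_mul]

/- The weight `w` brings `f` into the reach of the Riesz representation on `L²`, even when `μ` is
infinite and `L² ⊄ L¹`: the functional `h ↦ f (w h)` is represented by some `k ∈ L²`, and
`g = k / w` then represents `f`. -/
theorem surjective_lpPairing_top_one [SigmaFinite μ] :
    Function.Surjective ((ContinuousLinearMap.mul ℝ ℝ).lpPairing μ ∞ 1) := by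
  intro f
  obtain ⟨w₀, hw₀pos, hw₀⟩ := exists_memLp_forall_pos μ 2
  set w : Lp ℝ 2 μ := hw₀.toLp
  have hwpos : ∀ᵐ ω ∂μ, 0 < w ω := by
    filter_upwards [hw₀.coeFn_toLp] with ω hω
    exact hω ▸ hw₀pos ω
  obtain ⟨k, hk⟩ := exists_forall_apply_mulLp_eq_integral f w
  have hg : MemLp (fun ω => k ω / w ω) ∞ μ := by
    refine memLp_top_of_bound ((Lp.stronglyMeasurable k).measurable.div
      (Lp.stronglyMeasurable w).measurable).aestronglyMeasurable ‖f‖ ?_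
    filter_upwards [ae_abs_le_of_forall_apply_mulLp_eq_integral hk, hwpos] with ω hω hpos
    rw [Real.norm_eq_abs, abs_div, div_le_iff₀ (abs_pos.2 hpos.ne')]
    rw [abs_mul, abs_of_pos hpos, ← mul_assoc] at hω
    rw [abs_of_pos hpos]
    exact le_of_mul_le_mul_right hω hpos
  have hagree : (ContinuousLinearMap.mul ℝ ℝ).lpPairing μ ∞ 1 hg.toLp ∘ mulLp 2 1 w =
      f ∘ mulLp 2 1 w := by
    ext h
    rw [Function.comp_apply, Function.comp_apply, hk, ContinuousLinearMap.lpPairing_eq_integral]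
    refine integral_congr_ae ?_
    filter_upwards [hg.coeFn_toLp, coeFn_mulLp (r := 1) w h, hwpos] with ω hgω hprod hpos
    rw [hgω, hprod, ContinuousLinearMap.mul_apply', ← mul_assoc, div_mul_cancel₀ _ hpos.ne']
  exact ⟨hg.toLp, DFunLike.coe_injective <| (denseRange_mulLp ENNReal.one_ne_top
    (hwpos.mono fun _ => ne_of_gt)).equalizer (ContinuousLinearMap.continuous _) f.continuous
    hagree⟩

theorem exists_measurable_forall_abs_le_ae_eq (g : Lp ℝ ∞ μ) :
    ∃ X : Ω → ℝ, Measurable X ∧ (∀ ω, |X ω| ≤ ‖g‖) ∧ X =ᵐ[μ] g := by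
  have hgm : Measurable g := (Lp.stronglyMeasurable g).measurable
  have hbound : ∀ᵐ ω ∂μ, |g ω| ≤ ‖g‖ := by
    filter_upwards [enorm_ae_le_eLpNormEssSup g μ] with ω hω
    rw [← Real.norm_eq_abs, ← toReal_enorm, Lp.norm_def, eLpNorm_exponent_top]
    exact ENNReal.toReal_mono (Lp.eLpNorm_ne_top g) hω
  refine ⟨{ω | |g ω| ≤ ‖g‖}.indicator g,
    hgm.indicator (measurableSet_le hgm.abs measurable_const), fun ω => ?_, ?_⟩
  · by_cases hω : |g ω| ≤ ‖g‖ <;> simp [indicator, hω]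
  · filter_upwards [hbound] with ω hω
    exact indicator_of_mem (s := {ω | |g ω| ≤ ‖g‖}) hω g

end Duality

section Densities

variable {P : Measure Ω} {D : Set (Ω → ℝ)} {Z X : Ω → ℝ}

theorem Dens.integrable (hZ : Z ∈ Dens P) : Integrable Z P := by
  refine ⟨hZ.1.aestronglyMeasurable, ?_⟩
  rw [hasFiniteIntegral_iff_ofReal (ae_of_all _ hZ.2.1), hZ.2.2]
  exact ENNReal.one_lt_top

theorem eexp_eq_integral (h : Integrable (fun ω => Z ω * X ω) P) :
    eexp P Z X = ((∫ ω, Z ω * X ω ∂P : ℝ) : EReal) := by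
  have hpos : ∫⁻ ω, ENNReal.ofReal (Z ω * X ω) ∂P ≠ ⊤ := h.lintegral_lt_top.ne
  have hneg : ∫⁻ ω, ENNReal.ofReal (-(Z ω * X ω)) ∂P ≠ ⊤ := h.neg.lintegral_lt_top.ne
  rw [eexp, if_neg hneg, integral_eq_lintegral_pos_part_sub_lintegral_neg_part h, EReal.coe_sub,
    EReal.coe_ennreal_toReal hpos, EReal.coe_ennreal_toReal hneg]

/-- The set of `L¹`-classes of the functions in `D`: as `D` consists of functions rather than
classes, this is where the topology of `L¹` becomes available. -/
def l1Classes (P : Measure Ω) (D : Set (Ω → ℝ)) : Set (Lp ℝ 1 P) :=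
  {x | ∃ Z ∈ D, x =ᵐ[P] Z}

theorem convex_l1Classes (hD : Convex ℝ D) : Convex ℝ (l1Classes P D) := by
  rintro x ⟨Z, hZ, hxZ⟩ y ⟨Y, hY, hyY⟩ a b ha hb hab
  refine ⟨a • Z + b • Y, hD hZ hY ha hb hab, ?_⟩
  grw [Lp.coeFn_add, Lp.coeFn_smul, Lp.coeFn_smul, hxZ, hyY]

theorem L1Closed.mem_of_toL1_mem_closure (hD : L1Closed P D) (hZ : Z ∈ Dens P)
    (hcl : (Dens.integrable hZ).toL1 Z ∈ closure (l1Classes P D)) : Z ∈ D := by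
  obtain ⟨x, hxmem, hx⟩ := mem_closure_iff_seq_limit.1 hcl
  choose Y hYD hxY using hxmem
  refine hD Y hYD Z hZ ((tendsto_iff_norm_sub_tendsto_zero.1 hx).congr fun n => ?_)
  rw [L1.norm_eq_integral_norm]
  refine integral_congr_ae ?_
  filter_upwards [Lp.coeFn_sub (x n) ((Dens.integrable hZ).toL1 Z), hxY n,
    (Dens.integrable hZ).coeFn_toL1] with ω hsub hYω hZω
  rw [hsub, Pi.sub_apply, hYω, hZω, Real.norm_eq_abs]

theorem exists_bounded_eexp_eq_apply_toL1 [SigmaFinite P] (f : StrongDual ℝ (Lp ℝ 1 P)) :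
    ∃ X : Ω → ℝ, Measurable X ∧ (∃ C : ℝ, ∀ ω, |X ω| ≤ C) ∧
      ∀ {Z : Ω → ℝ} (hZ : Integrable Z P), eexp P Z X = (f (hZ.toL1 Z) : EReal) := by
  obtain ⟨g, rfl⟩ := surjective_lpPairing_top_one f
  obtain ⟨X, hXm, hXb, hXg⟩ := exists_measurable_forall_abs_le_ae_eq g
  refine ⟨X, hXm, ⟨_, hXb⟩, fun {Z} hZ => ?_⟩
  rw [eexp_eq_integral (hZ.mul_bdd hXm.aestronglyMeasurable (ae_of_all _ hXb)),
    ContinuousLinearMap.lpPairing_eq_integral]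
  refine congrArg _ (integral_congr_ae ?_)
  filter_upwards [hXg, hZ.coeFn_toL1] with ω hXω hZω
  rw [hXω, hZω, ContinuousLinearMap.mul_apply', mul_comm]

theorem exists_bounded_eexp_lt_cohU [SigmaFinite P] (hDsub : D ⊆ Dens P) (hDconv : Convex ℝ D)
    (hDclosed : L1Closed P D) (hZ : Z ∈ Dens P) (hZD : Z ∉ D) :
    ∃ X : Ω → ℝ, Measurable X ∧ (∃ C : ℝ, ∀ ω, |X ω| ≤ C) ∧ eexp P Z X < cohU P D X := by
  have hcl : (Dens.integrable hZ).toL1 Z ∉ closure (l1Classes P D) :=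
    fun h => hZD (hDclosed.mem_of_toL1_mem_closure hZ h)
  obtain ⟨f, c, hfZ, hfD⟩ :=
    geometric_hahn_banach_point_closed (convex_l1Classes hDconv).closure isClosed_closure hcl
  obtain ⟨X, hXm, hXb, hX⟩ := exists_bounded_eexp_eq_apply_toL1 f
  refine ⟨X, hXm, hXb, ?_⟩
  calc eexp P Z X = f ((Dens.integrable hZ).toL1 Z) := hX _
    _ < c := EReal.coe_lt_coe hfZ
    _ ≤ cohU P D X := le_iInf₂ fun Y hY => by
      have hYint := Dens.integrable (hDsub hY)
      rw [hX hYint]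
      exact EReal.coe_le_coe (hfD _ (subset_closure ⟨Y, hY, hYint.coeFn_toL1⟩)).le

theorem cohU_le_eexp (hZ : Z ∈ D) (X : Ω → ℝ) : cohU P D X ≤ eexp P Z X :=
  iInf₂_le Z hZ

end Densities

theorem stmt_1_general (P : Measure Ω) [SigmaFinite P] (D : Set (Ω → ℝ))
    (hDsub : D ⊆ Dens P) (hDconv : Convex ℝ D) (hDclosed : L1Closed P D) :
    D = {Z | Z ∈ Dens P ∧ ∀ X : Ω → ℝ, Measurable X → cohU P D X ≤ eexp P Z X} ∧
    D = {Z | Z ∈ Dens P ∧ ∀ X : Ω → ℝ, Measurable X → (∃ C : ℝ, ∀ ω, |X ω| ≤ C) →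
          cohU P D X ≤ eexp P Z X} := by
  have hmem {Z : Ω → ℝ} (hZ : Z ∈ Dens P)
      (hle : ∀ X : Ω → ℝ, Measurable X → (∃ C : ℝ, ∀ ω, |X ω| ≤ C) →
        cohU P D X ≤ eexp P Z X) : Z ∈ D := by
    by_contra hZD
    obtain ⟨X, hXm, hXb, hlt⟩ := exists_bounded_eexp_lt_cohU hDsub hDconv hDclosed hZ hZD
    exact hlt.not_ge (hle X hXm hXb)
  constructor
  · exact Subset.antisymm (fun Z hZ => ⟨hDsub hZ, fun X _ => cohU_le_eexp hZ X⟩)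
      fun Z hZ => hmem hZ.1 fun X hX _ => hZ.2 X hX
  · exact Subset.antisymm (fun Z hZ => ⟨hDsub hZ, fun X _ _ => cohU_le_eexp hZ X⟩)
      fun Z hZ => hmem hZ.1 hZ.2

/-- If `D` is an `L¹`-closed convex subset of `𝒫` and
`u(X) = inf_{Q ∈ D} E_Q[X]` for `X ∈ L⁰`, then `D` is the determining set of `u`, i.e.
`D = {Q ∈ 𝒫 : E_Q[X] ≥ u(X) for all X ∈ L⁰}`, and `D` is also the determining set of
the restriction of `u` to `L^∞`. -/
theorem stmt_1 (P : Measure Ω) [IsProbabilityMeasure P] (D : Set (Ω → ℝ))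
    (hDsub : D ⊆ Dens P) (hDne : D.Nonempty) (hDconv : Convex ℝ D)
    (hDclosed : L1Closed P D) :
    D = {Z | Z ∈ Dens P ∧ ∀ X : Ω → ℝ, Measurable X → cohU P D X ≤ eexp P Z X} ∧
    D = {Z | Z ∈ Dens P ∧ ∀ X : Ω → ℝ, Measurable X → (∃ C : ℝ, ∀ ω, |X ω| ≤ C) →
          cohU P D X ≤ eexp P Z X} :=
  stmt_1_general P D hDsub hDconv hDclosed
end

section
/- Let D_1, …, D_N ⊆ 𝒫 be sets satisfying L^1_w(D_n) = L^1_s(D_n) for each n. Then: (i) if D = Σ_{n=1}^N a_n D_n is a convex combination (a_n ≥ 0, Σ_n a_n = 1), then L^1_w(D) = L^1_s(D); (ii) if D = conv(D_1 ∪ … ∪ D_N), then L^1_w(D) = L^1_s(D). -/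
open MeasureTheory Filter Set
open scoped ENNReal

variable {Ω : Type*} [MeasurableSpace Ω]

/-! The inclusion `Ls ⊆ Lw` holds for every family of nonnegative densities of bounded mass: split
`|X|` at a level beyond which the tails are at most `1`.

Conversely, the weak space can only shrink when a family is enlarged, and `Lw (D + E) ⊆ Lw D` as
soon as `E` contains some `W`: by nonnegativity `V X` and `W X` are dominated by `(V + W) X`, and
then `E[V X] = E[(V + W) X] - E[W X]` with a second term that does not depend on `V`. The tail
suprema, on the other hand, are subadditive and positively homogeneous in the family, do not grow
under convex hulls, and turn unions into suprema. Hence `Lw ⊆ Ls` passes from the `D_n` to the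
`a_n D_n`, to finite sums, to finite unions and to convex hulls. Since the summands `a_n D_n` do not
consist of probability densities, the induction needs families of merely bounded mass. -/

section Families

open scoped Pointwise

variable {P : Measure Ω} {D E : Set (Ω → ℝ)} {X Z V W : Ω → ℝ} {a : ℝ} {c d : ℝ≥0∞}

/-- Densities with respect to `P` of measures of total mass at most `c`. -/
def densLE (P : Measure Ω) (c : ℝ≥0∞) : Set (Ω → ℝ) :=
  {Z | Measurable Z ∧ 0 ≤ Z ∧ ∫⁻ ω, ENNReal.ofReal (Z ω) ∂P ≤ c}

lemma Dens_subset_densLE_one : Dens P ⊆ densLE P 1 :=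
  fun _ ⟨hm, h0, hmass⟩ => ⟨hm, h0, hmass.le⟩

lemma densLE_mono (h : c ≤ d) : densLE P c ⊆ densLE P d :=
  fun _ ⟨hm, h0, hmass⟩ => ⟨hm, h0, hmass.trans h⟩

lemma add_mem_densLE (hZ : Z ∈ densLE P c) (hW : W ∈ densLE P d) : Z + W ∈ densLE P (c + d) := by
  refine ⟨hZ.1.add hW.1, add_nonneg hZ.2.1 hW.2.1, ?_⟩
  calc ∫⁻ ω, ENNReal.ofReal ((Z + W) ω) ∂P
      ≤ ∫⁻ ω, (ENNReal.ofReal (Z ω) + ENNReal.ofReal (W ω)) ∂P :=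
        lintegral_mono fun _ => ENNReal.ofReal_add_le
    _ = ∫⁻ ω, ENNReal.ofReal (Z ω) ∂P + ∫⁻ ω, ENNReal.ofReal (W ω) ∂P :=
        lintegral_add_left hZ.1.ennreal_ofReal _
    _ ≤ c + d := add_le_add hZ.2.2 hW.2.2

lemma smul_mem_densLE (ha : 0 ≤ a) (hZ : Z ∈ densLE P c) :
    a • Z ∈ densLE P (ENNReal.ofReal a * c) := by
  refine ⟨hZ.1.const_smul a, smul_nonneg ha hZ.2.1, ?_⟩
  simp only [Pi.smul_apply, smul_eq_mul, ENNReal.ofReal_mul ha]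
  rw [lintegral_const_mul' _ _ ENNReal.ofReal_ne_top]
  exact mul_le_mul_right hZ.2.2 _

lemma convex_densLE : Convex ℝ (densLE P c) := by
  intro Z hZ W hW a b ha hb hab
  have h := add_mem_densLE (smul_mem_densLE ha hZ) (smul_mem_densLE hb hW)
  rwa [← add_mul, ← ENNReal.ofReal_add ha hb, hab, ENNReal.ofReal_one, one_mul] at h

lemma eexp_of_integrable (h : Integrable (Z * X) P) :
    eexp P Z X = ((∫ ω, (Z * X) ω ∂P : ℝ) : EReal) := by
  have hpos : ∫⁻ ω, ENNReal.ofReal (Z ω * X ω) ∂P ≠ ⊤ := h.lintegral_lt_top.ne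
  have hneg : ∫⁻ ω, ENNReal.ofReal (-(Z ω * X ω)) ∂P ≠ ⊤ := h.neg.lintegral_lt_top.ne
  rw [eexp, if_neg hneg, integral_eq_lintegral_pos_part_sub_lintegral_neg_part h,
    EReal.coe_sub]
  simp only [Pi.mul_apply]
  rw [EReal.coe_ennreal_toReal hpos, EReal.coe_ennreal_toReal hneg]

lemma eexp_neg_of_integrable (h : Integrable (Z * X) P) :
    eexp P Z (fun ω => -X ω) = ((-∫ ω, (Z * X) ω ∂P : ℝ) : EReal) := by
  have hneg : Z * (fun ω => -X ω) = -(Z * X) := mul_neg Z X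
  rw [eexp_of_integrable (hneg ▸ h.neg), hneg, integral_neg']

lemma integrable_of_lintegral_ofReal_ne_top {μ : Measure Ω} {f : Ω → ℝ}
    (hf : AEStronglyMeasurable f μ) (hpos : ∫⁻ ω, ENNReal.ofReal (f ω) ∂μ ≠ ⊤)
    (hneg : ∫⁻ ω, ENNReal.ofReal (-f ω) ∂μ ≠ ⊤) : Integrable f μ := by
  refine ⟨hf, (hasFiniteIntegral_iff_norm f).2 ?_⟩
  calc ∫⁻ ω, ENNReal.ofReal ‖f ω‖ ∂μ
      = ∫⁻ ω, (ENNReal.ofReal (f ω) + ENNReal.ofReal (-f ω)) ∂μ := by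
        refine lintegral_congr fun ω => ?_
        rcases le_total 0 (f ω) with h | h
        · simp [abs_of_nonneg h, ENNReal.ofReal_of_nonpos (neg_nonpos.2 h)]
        · simp [abs_of_nonpos h, ENNReal.ofReal_of_nonpos h]
    _ = ∫⁻ ω, ENNReal.ofReal (f ω) ∂μ + ∫⁻ ω, ENNReal.ofReal (-f ω) ∂μ :=
        lintegral_add_left' hf.aemeasurable.ennreal_ofReal _
    _ < ⊤ := ENNReal.add_lt_top.2 ⟨hpos.lt_top, hneg.lt_top⟩

lemma lintegral_ofReal_neg_ne_top_of_bot_lt_eexp (h : ⊥ < eexp P Z X) :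
    ∫⁻ ω, ENNReal.ofReal (-(Z ω * X ω)) ∂P ≠ ⊤ :=
  fun htop => h.ne' (if_pos htop)

lemma integrable_of_bot_lt_eexp (hZ : Measurable Z) (hX : Measurable X)
    (h : ⊥ < eexp P Z X) (h' : ⊥ < eexp P Z (fun ω => -X ω)) : Integrable (Z * X) P := by
  have hpos := lintegral_ofReal_neg_ne_top_of_bot_lt_eexp h'
  simp only [mul_neg, neg_neg] at hpos
  exact integrable_of_lintegral_ofReal_ne_top (hZ.mul hX).aestronglyMeasurable hpos
    (lintegral_ofReal_neg_ne_top_of_bot_lt_eexp h)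

lemma bot_lt_cohU_iff : ⊥ < cohU P D X ↔ ∃ C : ℝ, ∀ Z ∈ D, (C : EReal) ≤ eexp P Z X := by
  simp only [← le_iInf₂_iff]
  constructor
  · intro h
    obtain ⟨C, -, hC⟩ := EReal.lt_iff_exists_real_btwn.1 h
    exact ⟨C, hC.le⟩
  · rintro ⟨C, hC⟩
    exact (EReal.bot_lt_coe C).trans_le hC

lemma mem_Lw_iff (hD : ∀ Z ∈ D, Measurable Z) :
    X ∈ Lw P D ↔ Measurable X ∧ ∃ C : ℝ, ∀ Z ∈ D,
      Integrable (Z * X) P ∧ |∫ ω, (Z * X) ω ∂P| ≤ C := by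
  refine and_congr_right fun hX => ?_
  rw [bot_lt_cohU_iff, bot_lt_cohU_iff]
  constructor
  · rintro ⟨⟨c, hc⟩, c', hc'⟩
    refine ⟨max (-c') (-c), fun Z hZ => ?_⟩
    have hint := integrable_of_bot_lt_eexp (hD Z hZ) hX
      ((EReal.bot_lt_coe c).trans_le (hc Z hZ)) ((EReal.bot_lt_coe c').trans_le (hc' Z hZ))
    have hlower := hc Z hZ
    have hupper := hc' Z hZ
    rw [eexp_of_integrable hint, EReal.coe_le_coe_iff] at hlower
    rw [eexp_neg_of_integrable hint, EReal.coe_le_coe_iff] at hupper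
    exact ⟨hint, abs_le'.2
      ⟨le_max_of_le_left (le_neg_of_le_neg hupper), le_max_of_le_right (neg_le_neg hlower)⟩⟩
  · rintro ⟨C, hC⟩
    refine ⟨⟨-C, fun Z hZ => ?_⟩, -C, fun Z hZ => ?_⟩ <;> obtain ⟨hint, hle⟩ := hC Z hZ
    · rw [eexp_of_integrable hint, EReal.coe_le_coe_iff]
      exact neg_le_of_abs_le hle
    · rw [eexp_neg_of_integrable hint, EReal.coe_le_coe_iff]
      exact neg_le_neg (le_of_abs_le hle)

lemma Lw_anti (h : D ⊆ E) : Lw P E ⊆ Lw P D := fun _ ⟨hX, hlower, hupper⟩ =>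
  ⟨hX, hlower.trans_le (biInf_mono fun _ hZ => h hZ), hupper.trans_le (biInf_mono fun _ hZ => h hZ)⟩

lemma Lw_smul_subset (hD : ∀ Z ∈ D, Measurable Z) (ha : a ≠ 0) : Lw P (a • D) ⊆ Lw P D := by
  have hD' : ∀ Z ∈ a • D, Measurable Z := by
    rintro _ ⟨Z, hZ, rfl⟩
    exact (hD Z hZ).const_smul a
  intro X hX
  obtain ⟨hXm, C, hC⟩ := (mem_Lw_iff hD').1 hX
  refine (mem_Lw_iff hD).2 ⟨hXm, |a|⁻¹ * C, fun Z hZ => ?_⟩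
  obtain ⟨hint, hle⟩ := hC _ (smul_mem_smul_set hZ)
  rw [smul_mul_assoc] at hint hle
  refine ⟨(integrable_smul_iff ha _).1 hint, ?_⟩
  rwa [le_inv_mul_iff₀ (abs_pos.2 ha), ← abs_mul, ← smul_eq_mul, ← integral_smul]

lemma integrable_mul_of_integrable_add_mul (hV : Measurable V) (hX : Measurable X) (hV0 : 0 ≤ V)
    (hW0 : 0 ≤ W) (h : Integrable ((V + W) * X) P) : Integrable (V * X) P := by
  refine h.mono (hV.mul hX).aestronglyMeasurable (ae_of_all _ fun ω => ?_)
  simp only [Pi.mul_apply, Pi.add_apply, norm_mul]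
  gcongr
  rw [Real.norm_of_nonneg (hV0 ω), Real.norm_of_nonneg (add_nonneg (hV0 ω) (hW0 ω))]
  exact le_add_of_nonneg_right (hW0 ω)

lemma Lw_add_subset_left (hD : ∀ Z ∈ D, Measurable Z ∧ 0 ≤ Z) (hE : ∀ Z ∈ E, Measurable Z ∧ 0 ≤ Z)
    (hne : E.Nonempty) : Lw P (D + E) ⊆ Lw P D := by
  have hDE : ∀ Z ∈ D + E, Measurable Z := by
    rintro _ ⟨V, hV, W, hW, rfl⟩
    exact (hD V hV).1.add (hE W hW).1
  obtain ⟨W, hW⟩ := hne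
  obtain ⟨hWm, hW0⟩ := hE W hW
  intro X hX
  obtain ⟨hXm, C, hC⟩ := (mem_Lw_iff hDE).1 hX
  refine (mem_Lw_iff fun Z hZ => (hD Z hZ).1).2 ⟨hXm, C + |∫ ω, (W * X) ω ∂P|, fun V hV => ?_⟩
  obtain ⟨hVm, hV0⟩ := hD V hV
  obtain ⟨hint, hle⟩ := hC _ (add_mem_add hV hW)
  have hVint := integrable_mul_of_integrable_add_mul hVm hXm hV0 hW0 hint
  have hWint := integrable_mul_of_integrable_add_mul hWm hXm hW0 hV0 (add_comm V W ▸ hint)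
  refine ⟨hVint, ?_⟩
  calc |∫ ω, (V * X) ω ∂P|
      = |∫ ω, ((V + W) * X) ω ∂P - ∫ ω, (W * X) ω ∂P| := by
        rw [add_mul, integral_add' hVint hWint, add_sub_cancel_right]
    _ ≤ |∫ ω, ((V + W) * X) ω ∂P| + |∫ ω, (W * X) ω ∂P| := abs_sub _ _
    _ ≤ C + |∫ ω, (W * X) ω ∂P| := by gcongr

/-- The contribution `E_Q[|X| 1_{|X| > n}]`, with `dQ/dP = Z`, of a single density to the supremum
`tailSup`. -/
noncomputable def tailInt (P : Measure Ω) (Z X : Ω → ℝ) (n : ℕ) : ℝ≥0∞ :=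
  ∫⁻ ω in {ω | (n : ℝ) < |X ω|}, ENNReal.ofReal (Z ω * |X ω|) ∂P

lemma tailInt_add_le (hZ : Measurable Z) (hX : Measurable X) (W : Ω → ℝ) (n : ℕ) :
    tailInt P (Z + W) X n ≤ tailInt P Z X n + tailInt P W X n := by
  have hm : Measurable fun ω => ENNReal.ofReal (Z ω * |X ω|) := (hZ.mul hX.abs).ennreal_ofReal
  simp only [tailInt]
  rw [← lintegral_add_left hm]
  refine lintegral_mono fun ω => ?_
  rw [Pi.add_apply, add_mul]
  exact ENNReal.ofReal_add_le

lemma tailInt_smul (ha : 0 ≤ a) (Z X : Ω → ℝ) (n : ℕ) :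
    tailInt P (a • Z) X n = ENNReal.ofReal a * tailInt P Z X n := by
  simp only [tailInt, Pi.smul_apply, smul_eq_mul, mul_assoc, ENNReal.ofReal_mul ha]
  exact lintegral_const_mul' _ _ ENNReal.ofReal_ne_top

lemma convex_setOf_tailInt_le (hX : Measurable X) (n : ℕ) (c : ℝ≥0∞) :
    Convex ℝ {Z | Measurable Z ∧ tailInt P Z X n ≤ c} := by
  rintro Z ⟨hZ, hZc⟩ W ⟨hW, hWc⟩ a b ha hb hab
  refine ⟨(hZ.const_smul a).add (hW.const_smul b), ?_⟩
  calc tailInt P (a • Z + b • W) X n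
      ≤ tailInt P (a • Z) X n + tailInt P (b • W) X n := tailInt_add_le (hZ.const_smul a) hX _ n
    _ ≤ ENNReal.ofReal a * c + ENNReal.ofReal b * c := by
        rw [tailInt_smul ha, tailInt_smul hb]
        gcongr
    _ = c := by rw [← add_mul, ← ENNReal.ofReal_add ha hb, hab, ENNReal.ofReal_one, one_mul]

lemma lintegral_mul_abs_le_add_tailInt (Z : Ω → ℝ) (hX : Measurable X) (n : ℕ) :
    ∫⁻ ω, ENNReal.ofReal (Z ω * |X ω|) ∂P ≤
      n * ∫⁻ ω, ENNReal.ofReal (Z ω) ∂P + tailInt P Z X n := by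
  have hS : MeasurableSet {ω | (n : ℝ) < |X ω|} := measurableSet_lt measurable_const hX.abs
  rw [← lintegral_add_compl _ hS, add_comm]
  refine add_le_add_left ?_ _
  calc ∫⁻ ω in {ω | (n : ℝ) < |X ω|}ᶜ, ENNReal.ofReal (Z ω * |X ω|) ∂P
      ≤ ∫⁻ ω in {ω | (n : ℝ) < |X ω|}ᶜ, n * ENNReal.ofReal (Z ω) ∂P := by
        refine setLIntegral_mono' hS.compl fun ω hω => ?_
        have hω' : |X ω| ≤ n := not_lt.1 hω
        rw [ENNReal.ofReal_mul' (abs_nonneg _), mul_comm, ← ENNReal.ofReal_natCast n]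
        gcongr
    _ ≤ ∫⁻ ω, n * ENNReal.ofReal (Z ω) ∂P := setLIntegral_le_lintegral _ _
    _ = n * ∫⁻ ω, ENNReal.ofReal (Z ω) ∂P := lintegral_const_mul' _ _ (ENNReal.natCast_ne_top n)

lemma tailInt_le_tailSup (hZ : Z ∈ D) (X : Ω → ℝ) (n : ℕ) : tailInt P Z X n ≤ tailSup P D X n :=
  le_iSup₂ (f := fun Z (_ : Z ∈ D) => tailInt P Z X n) Z hZ

lemma tailSup_le_iff {n : ℕ} : tailSup P D X n ≤ c ↔ ∀ Z ∈ D, tailInt P Z X n ≤ c :=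
  iSup₂_le_iff

lemma tailSup_add_le (hD : ∀ Z ∈ D, Measurable Z) (hX : Measurable X) (E : Set (Ω → ℝ)) (n : ℕ) :
    tailSup P (D + E) X n ≤ tailSup P D X n + tailSup P E X n := by
  rw [tailSup_le_iff]
  rintro _ ⟨V, hV, W, hW, rfl⟩
  exact (tailInt_add_le (hD V hV) hX W n).trans
    (add_le_add (tailInt_le_tailSup hV X n) (tailInt_le_tailSup hW X n))

lemma tailSup_smul_le (ha : 0 ≤ a) (D : Set (Ω → ℝ)) (X : Ω → ℝ) (n : ℕ) :
    tailSup P (a • D) X n ≤ ENNReal.ofReal a * tailSup P D X n := by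
  rw [tailSup_le_iff]
  rintro _ ⟨Z, hZ, rfl⟩
  rw [tailInt_smul ha]
  exact mul_le_mul_right (tailInt_le_tailSup hZ X n) _

lemma tailSup_convexHull_le (hD : ∀ Z ∈ D, Measurable Z) (hX : Measurable X) (n : ℕ) :
    tailSup P (convexHull ℝ D) X n ≤ tailSup P D X n := by
  have hsub : convexHull ℝ D ⊆ {Z | Measurable Z ∧ tailInt P Z X n ≤ tailSup P D X n} :=
    convexHull_min (fun Z hZ => ⟨hD Z hZ, tailInt_le_tailSup hZ X n⟩)
      (convex_setOf_tailInt_le hX n _)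
  exact tailSup_le_iff.2 fun Z hZ => (hsub hZ).2

lemma tendsto_tailSup_iUnion {ι : Type*} [Finite ι] {Ds : ι → Set (Ω → ℝ)}
    (h : ∀ i, Tendsto (tailSup P (Ds i) X) atTop (nhds 0)) :
    Tendsto (tailSup P (⋃ i, Ds i) X) atTop (nhds 0) := by
  simp only [ENNReal.tendsto_nhds_zero, tailSup_le_iff] at h ⊢
  intro ε hε
  filter_upwards [eventually_all.2 fun i => h i ε hε] with n hn Z hZ
  obtain ⟨i, hi⟩ := mem_iUnion.1 hZ
  exact hn i Z hi

lemma Ls_subset_Lw (hc : c ≠ ⊤) (hD : D ⊆ densLE P c) : Ls P D ⊆ Lw P D := by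
  rintro X ⟨hX, htail⟩
  obtain ⟨n, hn⟩ := (ENNReal.tendsto_nhds_zero.1 htail 1 one_pos).exists
  have htop : n * c + 1 ≠ ⊤ :=
    ENNReal.add_ne_top.2 ⟨ENNReal.mul_ne_top (ENNReal.natCast_ne_top n) hc, ENNReal.one_ne_top⟩
  refine (mem_Lw_iff fun Z hZ => (hD hZ).1).2 ⟨hX, (n * c + 1).toReal, fun Z hZ => ?_⟩
  obtain ⟨hZm, hZ0, hmass⟩ := hD hZ
  have hle : ∫⁻ ω, ENNReal.ofReal ‖(Z * X) ω‖ ∂P ≤ n * c + 1 := by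
    simp only [Pi.mul_apply, norm_mul, Real.norm_of_nonneg (hZ0 _), Real.norm_eq_abs]
    refine (lintegral_mul_abs_le_add_tailInt Z hX n).trans ?_
    gcongr
    exact (tailInt_le_tailSup hZ X n).trans hn
  refine ⟨⟨(hZm.mul hX).aestronglyMeasurable, ?_⟩, ?_⟩
  · exact (hasFiniteIntegral_iff_norm _).2 (hle.trans_lt htop.lt_top)
  · exact (norm_integral_le_lintegral_norm _).trans (ENNReal.toReal_mono htop hle)

/-- The families of nonnegative densities, of uniformly bounded mass, whose weak and strong
`L¹`-spaces coincide. Only the nontrivial inclusion is recorded; the other one is `Ls_subset_Lw`. -/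
structure WeakEqStrong (P : Measure Ω) (D : Set (Ω → ℝ)) : Prop where
  exists_subset_densLE : ∃ c ≠ ⊤, D ⊆ densLE P c
  Lw_subset_Ls : Lw P D ⊆ Ls P D

namespace WeakEqStrong

lemma Lw_eq_Ls (hD : WeakEqStrong P D) : Lw P D = Ls P D :=
  let ⟨_, hc, hsub⟩ := hD.exists_subset_densLE
  hD.Lw_subset_Ls.antisymm (Ls_subset_Lw hc hsub)

lemma measurable_nonneg (hD : WeakEqStrong P D) : ∀ Z ∈ D, Measurable Z ∧ 0 ≤ Z :=
  let ⟨_, _, hsub⟩ := hD.exists_subset_densLE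
  fun _ hZ => ⟨(hsub hZ).1, (hsub hZ).2.1⟩

lemma zero : WeakEqStrong P (0 : Set (Ω → ℝ)) where
  exists_subset_densLE := ⟨0, ENNReal.zero_ne_top, by
    rintro _ rfl
    exact ⟨measurable_zero, le_rfl, by simp⟩⟩
  Lw_subset_Ls X hX := ⟨hX.1, tendsto_const_nhds.congr fun n => by simp [tailSup]⟩

lemma add (hD : WeakEqStrong P D) (hE : WeakEqStrong P E) : WeakEqStrong P (D + E) where
  exists_subset_densLE := by
    obtain ⟨c, hc, hDc⟩ := hD.exists_subset_densLE
    obtain ⟨d, hd, hEd⟩ := hE.exists_subset_densLE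
    refine ⟨c + d, ENNReal.add_ne_top.2 ⟨hc, hd⟩, ?_⟩
    rintro _ ⟨V, hV, W, hW, rfl⟩
    exact add_mem_densLE (hDc hV) (hEd hW)
  Lw_subset_Ls X hX := by
    refine ⟨hX.1, ?_⟩
    rcases (D + E).eq_empty_or_nonempty with hempty | hne
    · exact tendsto_const_nhds.congr fun n => by simp [hempty, tailSup]
    obtain ⟨hDne, hEne⟩ := add_nonempty.1 hne
    have hXD : X ∈ Ls P D :=
      hD.Lw_subset_Ls (Lw_add_subset_left hD.measurable_nonneg hE.measurable_nonneg hEne hX)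
    have hXE : X ∈ Ls P E := hE.Lw_subset_Ls <|
      Lw_add_subset_left hE.measurable_nonneg hD.measurable_nonneg hDne (add_comm D E ▸ hX)
    have hlim := hXD.2.add hXE.2
    rw [add_zero] at hlim
    exact tendsto_nhds_bot_mono' hlim
      (tailSup_add_le (fun Z hZ => (hD.measurable_nonneg Z hZ).1) hX.1 E)

lemma smul (ha : 0 ≤ a) (hD : WeakEqStrong P D) : WeakEqStrong P (a • D) where
  exists_subset_densLE := by
    obtain ⟨c, hc, hsub⟩ := hD.exists_subset_densLE
    refine ⟨ENNReal.ofReal a * c, ENNReal.mul_ne_top ENNReal.ofReal_ne_top hc, ?_⟩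
    rintro _ ⟨Z, hZ, rfl⟩
    exact smul_mem_densLE ha (hsub hZ)
  Lw_subset_Ls X hX := by
    have hlim : Tendsto (fun n => ENNReal.ofReal a * tailSup P D X n) atTop (nhds 0) := by
      rcases ha.eq_or_lt with rfl | hpos
      · simp
      · have hXD : X ∈ Ls P D := hD.Lw_subset_Ls
          (Lw_smul_subset (fun Z hZ => (hD.measurable_nonneg Z hZ).1) hpos.ne' hX)
        simpa using ENNReal.Tendsto.const_mul hXD.2 (Or.inr ENNReal.ofReal_ne_top)
    exact ⟨hX.1, tendsto_nhds_bot_mono' hlim (tailSup_smul_le ha D X)⟩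

lemma sum {ι : Type*} [Fintype ι] {Ds : ι → Set (Ω → ℝ)} (hD : ∀ i, WeakEqStrong P (Ds i)) :
    WeakEqStrong P (∑ i, Ds i) :=
  Finset.sum_induction _ _ (fun _ _ => add) zero fun i _ => hD i

lemma iUnion {ι : Type*} [Finite ι] {Ds : ι → Set (Ω → ℝ)} (hD : ∀ i, WeakEqStrong P (Ds i)) :
    WeakEqStrong P (⋃ i, Ds i) where
  exists_subset_densLE := by
    cases nonempty_fintype ι
    choose c hc hsub using fun i => (hD i).exists_subset_densLE
    exact ⟨∑ i, c i, ENNReal.sum_ne_top.2 fun i _ => hc i, iUnion_subset fun i =>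
      (hsub i).trans (densLE_mono (Finset.single_le_sum_of_canonicallyOrdered (Finset.mem_univ i)))⟩
  Lw_subset_Ls X hX := ⟨hX.1, tendsto_tailSup_iUnion fun i =>
    ((hD i).Lw_subset_Ls (Lw_anti (subset_iUnion Ds i) hX)).2⟩

lemma convexHull (hD : WeakEqStrong P D) : WeakEqStrong P (convexHull ℝ D) where
  exists_subset_densLE :=
    let ⟨c, hc, hsub⟩ := hD.exists_subset_densLE
    ⟨c, hc, convexHull_min hsub convex_densLE⟩
  Lw_subset_Ls X hX :=
    have hXD : X ∈ Ls P D := hD.Lw_subset_Ls (Lw_anti (subset_convexHull ℝ D) hX)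
    ⟨hX.1, tendsto_nhds_bot_mono' hXD.2
      (tailSup_convexHull_le (fun Z hZ => (hD.measurable_nonneg Z hZ).1) hX.1)⟩

end WeakEqStrong

lemma setOf_weighted_sum_eq_sum_smul {α ι : Type*} [Fintype ι] (Ds : ι → Set (α → ℝ))
    (a : ι → ℝ) :
    {Z | ∃ W : ι → α → ℝ, (∀ i, W i ∈ Ds i) ∧ Z = fun x => ∑ i, a i * W i x} =
      ∑ i, a i • Ds i := by
  have hsum (W : ι → α → ℝ) : (fun x => ∑ i, a i * W i x) = ∑ i, a i • W i := by
    ext x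
    simp
  ext Z
  simp only [hsum, mem_ofPred_eq, mem_fintype_sum, mem_smul_set]
  constructor
  · rintro ⟨W, hW, rfl⟩
    exact ⟨fun i => a i • W i, fun i => ⟨W i, hW i, rfl⟩, rfl⟩
  · rintro ⟨g, hg, rfl⟩
    choose W hW hWg using hg
    exact ⟨W, hW, by simp only [hWg]⟩

end Families

theorem stmt_5_general {P : Measure Ω} {ι : Type*} [Fintype ι] {Ds : ι → Set (Ω → ℝ)}
    {c : ι → ℝ≥0∞} (hc : ∀ i, c i ≠ ⊤) (hsub : ∀ i, Ds i ⊆ densLE P (c i))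
    (hws : ∀ i, Lw P (Ds i) = Ls P (Ds i)) :
    (∀ a : ι → ℝ, (∀ i, 0 ≤ a i) →
      Lw P {Z | ∃ W : ι → Ω → ℝ, (∀ i, W i ∈ Ds i) ∧ Z = fun ω => ∑ i, a i * W i ω}
        = Ls P {Z | ∃ W : ι → Ω → ℝ, (∀ i, W i ∈ Ds i) ∧ Z = fun ω => ∑ i, a i * W i ω}) ∧
    Lw P (convexHull ℝ (⋃ i, Ds i)) = Ls P (convexHull ℝ (⋃ i, Ds i)) := by
  have hD (i : ι) : WeakEqStrong P (Ds i) := ⟨⟨c i, hc i, hsub i⟩, (hws i).subset⟩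
  refine ⟨fun a ha => ?_, (WeakEqStrong.iUnion hD).convexHull.Lw_eq_Ls⟩
  rw [setOf_weighted_sum_eq_sum_smul]
  exact (WeakEqStrong.sum fun i => (hD i).smul (ha i)).Lw_eq_Ls

/-- If `D_1, …, D_N ⊆ 𝒫` satisfy `L¹_w(D_n) = L¹_s(D_n)`, then
(i) any convex combination `D = Σ_n a_n D_n` satisfies `L¹_w(D) = L¹_s(D)`, and
(ii) `D = conv(D_1 ∪ … ∪ D_N)` satisfies `L¹_w(D) = L¹_s(D)`. -/
theorem stmt_5 (P : Measure Ω) [IsProbabilityMeasure P] (N : ℕ)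
    (Ds : Fin N → Set (Ω → ℝ)) (hsub : ∀ n, Ds n ⊆ Dens P)
    (hws : ∀ n, Lw P (Ds n) = Ls P (Ds n)) :
    (∀ a : Fin N → ℝ, (∀ n, 0 ≤ a n) → ∑ n, a n = 1 →
      Lw P {Z | ∃ W : Fin N → Ω → ℝ, (∀ n, W n ∈ Ds n) ∧
              Z = fun ω => ∑ n, a n * W n ω}
        = Ls P {Z | ∃ W : Fin N → Ω → ℝ, (∀ n, W n ∈ Ds n) ∧
              Z = fun ω => ∑ n, a n * W n ω}) ∧
    Lw P (convexHull ℝ (⋃ n, Ds n)) = Ls P (convexHull ℝ (⋃ n, Ds n)) := by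
  have h := stmt_5_general (fun _ => ENNReal.one_ne_top)
    (fun n => (hsub n).trans Dens_subset_densLE_one) hws
  exact ⟨fun a ha _ => h.1 a ha, h.2⟩
end
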